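/- Let f be a continuous real-valued function on (0, ∞). Then the following are equivalent: (i) f is non-negative on (0, ∞) and operator monotone on (0, ∞), i.e. for all bounded self-adjoint operators A, B on H with spectra contained in (0, ∞), A ≤ B implies f(A) ≤ f(B); (ii) there exist α, β ≥ 0 and a positive Borel measure μ on (0, ∞) with ∫_{(0,∞)} (1 + λ)^{-1} dμ(λ) < ∞ such that f(x) = α + βx + ∫_{(0,∞)} x/(x + λ) dμ(λ) for all x ∈ (0, ∞). -/

import Mathlib

section Part1

open Polynomial
inductive SOSP : ℕ → ℝ[X] → Prop
  | sq (n : ℕ) (a : ℝ[X]) (h : 2 * a.natDegree ≤ n) : SOSP n (a ^ 2)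
  | xsq (n : ℕ) (b : ℝ[X]) (h : 2 * b.natDegree + 1 ≤ n) : SOSP n (-(X * b ^ 2))
  | add (n : ℕ) (p q : ℝ[X]) (hp : SOSP n p) (hq : SOSP n q) : SOSP n (p + q)

theorem SOSP.mul {n m : ℕ} {p q : ℝ[X]} (hp : SOSP n p) (hq : SOSP m q) :
    SOSP (n + m) (p * q) := by
  induction hp with
  | add p p' h h' i i' => rw [add_mul]; exact SOSP.add _ _ _ (by assumption) (by assumption)
  | sq a ha =>
    induction hq with
    | add p p' h h' i i' => rw [mul_add]; exact SOSP.add _ _ _ (by assumption) (by assumption)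
    | sq b hb =>
      rw [← mul_pow]; refine SOSP.sq _ _ ?_
      have := natDegree_mul_le (p := a) (q := b); lia
    | xsq b hb =>
      rw [show a ^ 2 * -(X * b ^ 2) = -(X * (a * b) ^ 2) by ring]; refine SOSP.xsq _ _ ?_
      have := natDegree_mul_le (p := a) (q := b); lia
  | xsq a ha =>
    induction hq with
    | add p p' h h' i i' => rw [mul_add]; exact SOSP.add _ _ _ (by assumption) (by assumption)
    | sq b hb =>
      rw [show -(X * a ^ 2) * b ^ 2 = -(X * (a * b) ^ 2) by ring]; refine SOSP.xsq _ _ ?_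
      have := natDegree_mul_le (p := a) (q := b); lia
    | xsq b hb =>
      rw [show -(X * a ^ 2) * -(X * b ^ 2) = (X * (a * b)) ^ 2 by ring]; refine SOSP.sq _ _ ?_
      have := natDegree_mul_le (p := a) (q := b)
      have := natDegree_mul_le (p := X) (q := a * b)
      rw [natDegree_X] at this
      lia

theorem SOSP.of_nonneg : ∀ (n : ℕ) (p : ℝ[X]), p.natDegree = n → (∀ t < 0, 0 ≤ p.eval t) →
    SOSP n p := by
  intro n
  induction n using Nat.strong_induction_on with
  | _ n ih =>
  intro p hn hp
  rcases Nat.eq_zero_or_pos n with h0 | h0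
  · obtain ⟨c, rfl⟩ := natDegree_eq_zero.mp (hn.trans h0)
    have hc : 0 ≤ c := by simpa using hp (-1) (by norm_num)
    have : (C c : ℝ[X]) = (C (√c)) ^ 2 := by rw [← C_pow, Real.sq_sqrt hc]
    rw [this]; exact SOSP.sq _ _ (by simp)
  have hp0 : p ≠ 0 := by rintro rfl; simp at hn; lia
  have hne : (p.map (algebraMap ℝ ℂ)).degree ≠ 0 := by
    rw [degree_map]; intro h
    have h1 : p.natDegree = 0 := natDegree_eq_of_degree_eq_some h
    lia
  obtain ⟨z, hz⟩ := IsAlgClosed.exists_root _ hne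
  have hz' : aeval z p = 0 := by
    rw [IsRoot.def, eval_map, ← aeval_def] at hz; exact hz
  by_cases him : z.im = 0
  · -- real root
    have hzr : z = ((z.re : ℝ) : ℂ) := by apply Complex.ext <;> simp [him]
    generalize z.re = r at hzr
    have hr : p.eval r = 0 := by
      rw [hzr] at hz'
      have : aeval ((r : ℝ) : ℂ) p = ((p.eval r : ℝ) : ℂ) := by
        have := aeval_algebraMap_apply ℂ r p
        simpa using this
      rw [this] at hz'; exact_mod_cast hz'
    obtain ⟨q, rfl⟩ := dvd_iff_isRoot.mpr hr
    have hq0 : q ≠ 0 := by rintro rfl; simp at hp0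
    have hdeg : q.natDegree + 1 = n := by
      rw [natDegree_mul (X_sub_C_ne_zero r) hq0, natDegree_X_sub_C] at hn; lia
    by_cases hr0 : 0 ≤ r
    · have h1 : SOSP 1 (C r - X) := by
        have : (C r - X : ℝ[X]) = (C (√r)) ^ 2 + -(X * (C 1) ^ 2) := by
          rw [← C_pow, Real.sq_sqrt hr0]; simp; ring
        rw [this]
        exact SOSP.add _ _ _ (SOSP.sq _ _ (by simp)) (SOSP.xsq _ _ (by simp))
      have h2 : SOSP q.natDegree (-q) := by
        refine ih _ (by lia) _ (by simp) ?_
        intro t ht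
        have := hp t ht
        simp only [eval_mul, eval_sub, eval_X, eval_C, eval_neg] at this ⊢
        nlinarith
      have := h1.mul h2
      rw [show (X - C r) * q = (C r - X) * -q by ring]
      convert this using 1; lia
    · push Not at hr0
      have hq : q.eval r = 0 := by
        have hcont : ContinuousAt (fun t => q.eval t) r := q.continuous.continuousAt
        apply le_antisymm
        · refine le_of_tendsto (hcont.tendsto.mono_left (nhdsWithin_le_nhds (s := Set.Iio r))) ?_
          filter_upwards [self_mem_nhdsWithin] with t ht
          have := hp t (lt_trans ht hr0)
          simp only [eval_mul, eval_sub, eval_X, eval_C] at this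
          have ht' : t < r := ht
          nlinarith
        · refine ge_of_tendsto (hcont.tendsto.mono_left (nhdsWithin_le_nhds (s := Set.Ioi r))) ?_
          filter_upwards [Ioo_mem_nhdsGT hr0] with t ht
          have := hp t ht.2
          simp only [eval_mul, eval_sub, eval_X, eval_C] at this
          have ht' : r < t := ht.1
          nlinarith
      obtain ⟨q', rfl⟩ := dvd_iff_isRoot.mpr hq
      have hq0' : q' ≠ 0 := by rintro rfl; simp at hq0
      rw [natDegree_mul (X_sub_C_ne_zero r) hq0', natDegree_X_sub_C] at hdeg
      have h2 : SOSP q'.natDegree q' := by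
        refine ih _ (by lia) _ rfl ?_
        have key : ∀ t < 0, t ≠ r → 0 ≤ q'.eval t := by
          intro t ht htr
          have := hp t ht
          simp only [eval_mul, eval_sub, eval_X, eval_C] at this
          rw [← mul_assoc, ← pow_two] at this
          exact nonneg_of_mul_nonneg_right this (by have := sub_ne_zero.mpr htr; positivity)
        intro t ht
        by_cases htr : t = r
        · subst htr
          have hcont : ContinuousAt (fun s => q'.eval s) t := q'.continuous.continuousAt
          refine ge_of_tendsto (hcont.tendsto.mono_left (nhdsWithin_le_nhds (s := Set.Ioi t))) ?_
          filter_upwards [Ioo_mem_nhdsGT hr0] with s hs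
          exact key s hs.2 hs.1.ne'
        · exact key t ht htr
      have h1 : SOSP 2 ((X - C r) ^ 2) := SOSP.sq _ _ (by simp)
      have := h1.mul h2
      rw [show (X - C r) * ((X - C r) * q') = (X - C r) ^ 2 * q' by ring]
      convert this using 1; lia
  · obtain ⟨q, hq⟩ := quadratic_dvd_of_aeval_eq_zero_im_ne_zero p hz' him
    have hquad : (X ^ 2 - C (2 * z.re) * X + C (‖z‖ ^ 2) : ℝ[X]) = (X - C z.re) ^ 2 + (C z.im) ^ 2 := by
      rw [← Complex.normSq_eq_norm_sq, Complex.normSq_apply]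
      simp only [C_mul, C_add, map_ofNat]; ring
    rw [hquad] at hq
    have hmon : ((X - C z.re) ^ 2 + (C z.im) ^ 2 : ℝ[X]).natDegree = 2 := by
      have h2 : ((X - C z.re) ^ 2 : ℝ[X]).natDegree = 2 := by
        rw [natDegree_pow, natDegree_X_sub_C]
      have h3 : ((C z.im) ^ 2 : ℝ[X]).natDegree = 0 := by
        rw [natDegree_pow, natDegree_C]
      rw [natDegree_add_eq_left_of_natDegree_lt] <;> rw [h2]
      rw [h3]; norm_num
    have hq0 : q ≠ 0 := by rintro rfl; simp at hq; exact hp0 hq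
    have hne0 : ((X - C z.re) ^ 2 + (C z.im) ^ 2 : ℝ[X]) ≠ 0 := by
      intro h; rw [h] at hmon; simp at hmon
    have hdeg : 2 + q.natDegree = n := by
      rw [← hn, hq, natDegree_mul hne0 hq0, hmon]
    have h2 : SOSP q.natDegree q := by
      refine ih _ (by lia) _ rfl ?_
      intro t ht
      have := hp t ht
      rw [hq] at this
      simp only [eval_mul, eval_sub, eval_X, eval_C, eval_add, eval_pow] at this
      exact nonneg_of_mul_nonneg_right this (by positivity)
    have h1 : SOSP 2 ((X - C z.re) ^ 2 + (C z.im) ^ 2 : ℝ[X]) :=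
      SOSP.add _ _ _ (SOSP.sq _ _ (by simp)) (SOSP.sq _ _ (by simp))
    rw [hq, ← hdeg]
    exact h1.mul h2

end Part1

section Part2

open ContinuousLinearMap MeasureTheory
variable {H : Type*} [NormedAddCommGroup H] [InnerProductSpace ℂ H] [CompleteSpace H]

theorem real_spec_pos {A : H →L[ℂ] H} (hA : spectrum ℂ A ⊆ (fun x : ℝ => (x : ℂ)) '' Set.Ioi (0 : ℝ)) :
    ∀ x ∈ spectrum ℝ A, 0 < x := by
  intro x hx
  have : algebraMap ℝ ℂ x ∈ spectrum ℂ A := by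
    rw [spectrum.algebraMap_mem_iff ℂ]; exact hx
  obtain ⟨y, hy, hxy⟩ := hA this
  have : y = x := by simpa using hxy
  exact this ▸ hy

theorem cfc_kernel {l : ℝ} (hl : 0 < l) {A : H →L[ℂ] H} (hA : IsSelfAdjoint A)
    (hs : ∀ x ∈ spectrum ℝ A, 0 < x) :
    cfc (fun x : ℝ => x / (x + l)) A = 1 - l • Ring.inverse (A + algebraMap ℝ (H →L[ℂ] H) l) := by
  have hne : ∀ x ∈ spectrum ℝ A, x + l ≠ 0 := fun x hx => by have := hs x hx; positivity
  have hc : ContinuousOn (fun x : ℝ => (x + l)⁻¹) (spectrum ℝ A) :=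
    ContinuousOn.inv₀ (by fun_prop) hne
  have h1 : cfc (fun x : ℝ => x / (x + l)) A = cfc (fun x : ℝ => 1 - l • (x + l)⁻¹) A := by
    apply cfc_congr
    intro x hx
    have := hne x hx
    simp only [smul_eq_mul]; field_simp; ring
  rw [h1, cfc_sub (fun _ : ℝ => (1 : ℝ)) (fun x : ℝ => l • (x + l)⁻¹) A (by fun_prop)
    (hc.const_smul l), cfc_const_one ℝ A, cfc_smul l _ A hc,
    cfc_inv (fun x : ℝ => x + l) A hne, cfc_add_const l (fun x : ℝ => x) A, cfc_id' ℝ A]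

theorem strictPos_of_spec {A : H →L[ℂ] H} (hA : IsSelfAdjoint A)
    (hs : ∀ x ∈ spectrum ℝ A, 0 < x) : 0 ≤ A := by
  have := (StarOrderedRing.nonneg_iff_spectrum_nonneg (R := ℝ) A hA)
  exact this.2 fun x hx => (hs x hx).le

theorem mono_kernel {l : ℝ} (hl : 0 < l) {A B : H →L[ℂ] H} (hA : IsSelfAdjoint A)
    (hB : IsSelfAdjoint B) (hsA : ∀ x ∈ spectrum ℝ A, 0 < x) (hsB : ∀ x ∈ spectrum ℝ B, 0 < x)
    (hAB : A ≤ B) :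
    cfc (fun x : ℝ => x / (x + l)) A ≤ cfc (fun x : ℝ => x / (x + l)) B := by
  rw [cfc_kernel hl hA hsA, cfc_kernel hl hB hsB]
  have h0 : 0 ≤ A := strictPos_of_spec hA hsA
  have h1 : IsStrictlyPositive (algebraMap ℝ (H →L[ℂ] H) l) := by
    rw [IsStrictlyPositive.iff_of_unital]
    refine ⟨?_, (IsUnit.mk0 l hl.ne').map (algebraMap ℝ (H →L[ℂ] H))⟩
    exact algebraMap_nonneg (H →L[ℂ] H) hl.le
  have := CStarAlgebra.ringInverse_le_ringInverse (add_le_add_left hAB (algebraMap ℝ (H →L[ℂ] H) l))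
    (IsStrictlyPositive.nonneg_add h0 h1)
  gcongr

theorem kernel_bound {x M l : ℝ} (hx : 0 < x) (hM : 1 ≤ M) (hxM : x ≤ M) (hl : 0 < l) :
    ‖x / (x + l)‖ ≤ M * (1 + l)⁻¹ := by
  rw [Real.norm_of_nonneg (by positivity), ← div_eq_mul_inv, div_le_div_iff₀ (by positivity) (by positivity)]
  nlinarith

theorem kernel_cfc_integral (μ : Measure ℝ) (hμ : μ (Set.Ioi (0 : ℝ))ᶜ = 0)
    (hint : Integrable (fun l : ℝ => (1 + l)⁻¹) μ) {A : H →L[ℂ] H} (hA : IsSelfAdjoint A)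
    (hs : ∀ x ∈ spectrum ℝ A, 0 < x) :
    Integrable (fun l => cfc (fun x : ℝ => x / (x + l)) A) μ ∧
    cfc (fun x : ℝ => ∫ l, x / (x + l) ∂μ) A = ∫ l, cfc (fun x : ℝ => x / (x + l)) A ∂μ := by
  have hμr : μ.restrict (Set.Ioi 0) = μ := Measure.restrict_eq_self_of_ae_mem hμ
  obtain ⟨M, hM⟩ := (spectrum.isCompact (𝕜 := ℝ) A).bddAbove
  have hcont : ContinuousOn (Function.uncurry fun l x : ℝ => x / (x + l))
      (Set.Ioi 0 ×ˢ spectrum ℝ A) := by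
    refine ContinuousOn.div (by fun_prop) (by fun_prop) ?_
    rintro ⟨l, x⟩ ⟨hl, hx⟩
    have := hs x hx
    have : 0 < l := hl
    simp only; positivity
  have hb : ∀ᵐ l ∂(μ.restrict (Set.Ioi 0)), ∀ x ∈ spectrum ℝ A,
      ‖x / (x + l)‖ ≤ max 1 M * (1 + l)⁻¹ := by
    filter_upwards [ae_restrict_mem measurableSet_Ioi] with l hl x hx
    exact kernel_bound (hs x hx) (le_max_left _ _) ((hM hx).trans (le_max_right _ _)) hl
  have hfi : HasFiniteIntegral (fun l : ℝ => max 1 M * (1 + l)⁻¹) (μ.restrict (Set.Ioi 0)) := by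
    rw [hμr]; exact (hint.const_mul _).2
  have h1 := integrableOn_cfc measurableSet_Ioi (fun l x : ℝ => x / (x + l)) _ A hcont hb hfi hA
  have h2 := cfc_setIntegral measurableSet_Ioi (fun l x : ℝ => x / (x + l)) _ A hcont hb hfi hA
  rw [IntegrableOn, hμr] at h1
  rw [hμr] at h2
  exact ⟨h1, h2⟩

theorem easy_dir (f : ℝ → ℝ) (hf : ContinuousOn f (Set.Ioi (0 : ℝ)))
    (α β : ℝ) (μ : Measure ℝ) (hα : 0 ≤ α) (hβ : 0 ≤ β) (hμ : μ (Set.Ioi (0 : ℝ))ᶜ = 0)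
    (hint : Integrable (fun l : ℝ => (1 + l)⁻¹) μ)
    (hrep : ∀ x : ℝ, 0 < x → f x = α + β * x + ∫ l, x / (x + l) ∂μ) :
    ((∀ x : ℝ, 0 < x → 0 ≤ f x) ∧
      (∀ A B : H →L[ℂ] H, IsSelfAdjoint A → IsSelfAdjoint B →
        spectrum ℂ A ⊆ (fun x : ℝ => (x : ℂ)) '' Set.Ioi (0 : ℝ) →
        spectrum ℂ B ⊆ (fun x : ℝ => (x : ℂ)) '' Set.Ioi (0 : ℝ) →
        (B - A).IsPositive → (cfc f B - cfc f A).IsPositive)) := by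
  have hae : ∀ᵐ l ∂μ, 0 < l := hμ
  constructor
  · intro x hx
    rw [hrep x hx]
    have : 0 ≤ ∫ l, x / (x + l) ∂μ := by
      apply integral_nonneg_of_ae
      filter_upwards [hae] with l hl
      simp only [Pi.zero_apply]; positivity
    positivity
  intro A B hA hB hsA hsB hAB
  replace hsA := real_spec_pos hsA
  replace hsB := real_spec_pos hsB
  rw [← le_def] at hAB ⊢
  have key : ∀ T : H →L[ℂ] H, IsSelfAdjoint T → (∀ x ∈ spectrum ℝ T, 0 < x) →
      cfc f T = algebraMap ℝ (H →L[ℂ] H) α + β • T + ∫ l, cfc (fun x : ℝ => x / (x + l)) T ∂μ := by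
    intro T hT hs
    have hcI : ContinuousOn (fun x => ∫ l, x / (x + l) ∂μ) (spectrum ℝ T) := by
      have : ContinuousOn (fun x => f x - (α + β * x)) (spectrum ℝ T) :=
        (hf.mono hs).sub (by fun_prop)
      refine this.congr fun x hx => ?_
      have := hrep x (hs x hx)
      simp only [this]; ring
    rw [← (kernel_cfc_integral μ hμ hint hT hs).2]
    have : cfc f T = cfc (fun x => (α + β • x) + ∫ l, x / (x + l) ∂μ) T := by
      apply cfc_congr
      intro x hx
      exact hrep x (hs x hx)
    rw [this, cfc_add T (fun x : ℝ => α + β • x) (fun x => ∫ l, x / (x + l) ∂μ) (by fun_prop) hcI,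
      cfc_const_add α (fun x : ℝ => β • x) T, cfc_smul β (fun x : ℝ => x) T, cfc_id' ℝ T]
  rw [key A hA hsA, key B hB hsB]
  have h3 : ∫ l, cfc (fun x : ℝ => x / (x + l)) A ∂μ ≤ ∫ l, cfc (fun x : ℝ => x / (x + l)) B ∂μ := by
    refine integral_mono_ae (kernel_cfc_integral μ hμ hint hA hsA).1
      (kernel_cfc_integral μ hμ hint hB hsB).1 ?_
    filter_upwards [hae] with l hl
    exact mono_kernel hl hA hB hsA hsB hAB
  gcongr

end Part2

section Part3

open ContinuousLinearMap MeasureTheory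
variable {H : Type*} [NormedAddCommGroup H] [InnerProductSpace ℂ H] [CompleteSpace H]

theorem exists_onb (hinf : ¬ FiniteDimensional ℂ H) (m : ℕ) :
    ∃ e : Fin m → H, Orthonormal ℂ e := by
  obtain ⟨w, b, hb⟩ := exists_hilbertBasis ℂ H
  have hw : Infinite w := by
    by_contra hfin
    rw [not_infinite_iff_finite] at hfin
    have := Fintype.ofFinite w
    exact hinf (Module.Finite.of_basis b.toOrthonormalBasis.toBasis)
  exact ⟨fun i => b (Infinite.natEmbedding w i), b.orthonormal.comp _
    ((Infinite.natEmbedding w).injective.comp Fin.val_injective)⟩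

theorem cfc_eigen {T : H →L[ℂ] H} (hT : IsSelfAdjoint T) {f : ℝ → ℝ}
    (hf : ContinuousOn f (spectrum ℝ T)) {y : ℝ} {g : H} (hg : T g = (y : ℂ) • g) :
    cfc f T g = (f y : ℂ) • g := by
  by_cases hg0 : g = 0
  · simp [hg0]
  have hy : y ∈ spectrum ℝ T := by
    rw [spectrum.mem_iff]
    intro hu
    obtain ⟨S, hS⟩ := hu.exists_left_inv
    have h1 : (algebraMap ℝ (H →L[ℂ] H) y - T) g = 0 := by
      rw [Algebra.algebraMap_eq_smul_one, sub_apply, smul_apply, one_apply_eq_self, hg]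
      simp
    have : (S * (algebraMap ℝ (H →L[ℂ] H) y - T)) g = 0 := by
      change S ((algebraMap ℝ (H →L[ℂ] H) y - T) g) = 0
      rw [h1, map_zero]
    rw [hS] at this
    exact hg0 (by simpa using this)
  have key : ∀ φ : C(spectrum ℝ T, ℝ), cfcHom hT φ g = ((φ ⟨y, hy⟩ : ℝ) : ℂ) • g := by
    intro φ
    induction φ using ContinuousMap.induction_on_of_compact with
    | const r =>
      have : cfcHom hT (ContinuousMap.const (spectrum ℝ T) r) = algebraMap ℝ (H →L[ℂ] H) r := by
        conv_lhs =>
          enter [2]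
          equals algebraMap ℝ _ r => rfl
        rw [AlgHomClass.commutes]
      rw [this, Algebra.algebraMap_eq_smul_one, smul_apply, one_apply_eq_self]
      simp
    | id => rw [cfcHom_id hT, hg]; rfl
    | star_id => rw [map_star, cfcHom_id hT, hT.star_eq, hg]; rfl
    | add f g hf hg => rw [map_add, add_apply, hf, hg, ← add_smul]; simp
    | mul f g hf hg =>
      rw [map_mul]
      change cfcHom hT f (cfcHom hT g _) = _
      rw [hg, map_smul, hf, smul_smul]; simp [mul_comm]
    | frequently f hf =>
      have hcl : IsClosed {φ : C(spectrum ℝ T, ℝ) | cfcHom hT φ g = ((φ ⟨y, hy⟩ : ℝ) : ℂ) • g} := by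
        refine isClosed_eq ?_ ?_
        · have := cfcHom_continuous (R := ℝ) hT
          exact (ContinuousLinearMap.apply ℂ H g).continuous.comp this
        · have : Continuous fun φ : C(spectrum ℝ T, ℝ) => φ ⟨y, hy⟩ :=
            by fun_prop
          exact (Complex.continuous_ofReal.comp this).smul continuous_const
      have := mem_closure_iff_frequently.mpr hf
      exact hcl.closure_subset this
  rw [cfc_apply f T hT hf, key]
  rfl

theorem spec_of_le {T : H →L[ℂ] H} (hT : IsSelfAdjoint T) {ε : ℝ} (hε : 0 < ε)
    (h : algebraMap ℝ (H →L[ℂ] H) ε ≤ T) :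
    (∀ x ∈ spectrum ℝ T, 0 < x) ∧
    spectrum ℂ T ⊆ (fun x : ℝ => (x : ℂ)) '' Set.Ioi (0 : ℝ) := by
  have h1 : ∀ x ∈ spectrum ℝ T, 0 < x := fun x hx =>
    hε.trans_le ((algebraMap_le_iff_le_spectrum hT).1 h x hx)
  refine ⟨h1, fun z hz => ?_⟩
  have h2 := hT.mem_spectrum_eq_re hz
  refine ⟨z.re, h1 _ ?_, h2.symm⟩
  rw [← spectrum.algebraMap_mem_iff ℂ]
  change ((z.re : ℝ) : ℂ) ∈ _
  rw [← h2]; exact hz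

/-- real coordinate vectors -/
noncomputable def rvec {m : ℕ} (e : Fin m → H) (a : Fin m → ℝ) : H := ∑ i, (a i : ℂ) • e i

theorem rvec_inner {m : ℕ} {e : Fin m → H} (he : Orthonormal ℂ e) (a b : Fin m → ℝ) :
    inner ℂ (rvec e a) (rvec e b) = ((∑ i, a i * b i : ℝ) : ℂ) := by
  rw [rvec, rvec, he.inner_sum]; simp

theorem lagrange_sum {m : ℕ} {x : Fin m → ℝ} (hx : Function.Injective x) {b : Polynomial ℝ}
    (hb : b.degree < m) {z : ℝ} (hz : ∀ i, z ≠ x i) :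
    ∑ i, Lagrange.nodalWeight Finset.univ x i * (z - x i)⁻¹ * b.eval (x i) =
      b.eval z / ∏ i, (z - x i) := by
  have h1 := Lagrange.eval_interpolate_not_at_node (s := Finset.univ) (v := x)
    (fun i => b.eval (x i)) (x := z) (fun i _ => hz i)
  rw [← Lagrange.eq_interpolate hx.injOn (by simpa using hb), Lagrange.eval_nodal] at h1
  rw [h1, mul_div_cancel_left₀]
  exact Finset.prod_ne_zero_iff.mpr fun i _ => sub_ne_zero.mpr (hz i)

open Polynomial in
theorem secular {m : ℕ} {x y : Fin m → ℝ} (hx : Function.Injective x) (hxy : ∀ i j, x i ≠ y j)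
    (j : Fin m) :
    ∑ i, -(∏ k, (x i - y k)) * Lagrange.nodalWeight Finset.univ x i * (y j - x i)⁻¹ = 1 := by
  have hdeg : (Lagrange.nodal Finset.univ y - Lagrange.nodal Finset.univ x : ℝ[X]).degree < m := by
    have := degree_sub_lt_left (p := Lagrange.nodal Finset.univ y) (q := Lagrange.nodal Finset.univ x)
      (by simp [Lagrange.degree_nodal]) Lagrange.nodal_ne_zero
      (by rw [Lagrange.nodal_monic.leadingCoeff, Lagrange.nodal_monic.leadingCoeff])
    simpa [Lagrange.degree_nodal] using this
  have h := lagrange_sum hx hdeg (z := y j) (fun i => (hxy i j).symm)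
  have hx0 : ∀ i, (Lagrange.nodal Finset.univ x).eval (x i) = 0 := fun i =>
    Lagrange.eval_nodal_at_node (Finset.mem_univ i)
  have hy0 : (Lagrange.nodal Finset.univ y).eval (y j) = 0 :=
    Lagrange.eval_nodal_at_node (Finset.mem_univ j)
  simp only [eval_sub, hx0, hy0] at h
  simp only [Lagrange.eval_nodal, zero_sub, sub_zero] at h
  rw [neg_div, div_self (Finset.prod_ne_zero_iff.mpr fun i _ => sub_ne_zero.mpr (hxy i j).symm)] at h
  rw [← neg_inj, ← h, ← Finset.sum_neg_distrib]
  refine Finset.sum_congr rfl fun i _ => by ring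

def OpMono (H : Type*) [NormedAddCommGroup H] [InnerProductSpace ℂ H] [CompleteSpace H]
    (f : ℝ → ℝ) : Prop :=
  ∀ A B : H →L[ℂ] H, IsSelfAdjoint A → IsSelfAdjoint B →
        spectrum ℂ A ⊆ (fun x : ℝ => (x : ℂ)) '' Set.Ioi (0 : ℝ) →
        spectrum ℂ B ⊆ (fun x : ℝ => (x : ℂ)) '' Set.Ioi (0 : ℝ) →
        (B - A).IsPositive → (cfc f B - cfc f A).IsPositive

open InnerProductSpace in
theorem loewner_core (hinf : ¬ FiniteDimensional ℂ H) {f : ℝ → ℝ}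
    (hf : ContinuousOn f (Set.Ioi (0 : ℝ))) (hmono : OpMono H f) {m : ℕ} {x y : Fin m → ℝ}
    (hpos : ∀ i, 0 < x i)
    (hx : Function.Injective x) (hy : Function.Injective y) (hxy : ∀ i j, x i ≠ y j)
    (hsign : ∀ i, 0 ≤ -(∏ k, (x i - y k)) * Lagrange.nodalWeight Finset.univ x i)
    {b : Polynomial ℝ} (hb : b.degree < m) :
    0 ≤ ∑ j, f (y j) * ((b.eval (y j)) ^ 2 * Lagrange.nodalWeight Finset.univ y j
          / ∏ i, (y j - x i))
      + ∑ i, f (x i) * ((b.eval (x i)) ^ 2 * Lagrange.nodalWeight Finset.univ x i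
          / ∏ j, (x i - y j)) := by
  obtain ⟨e, he⟩ := exists_onb hinf m
  obtain ⟨ε, hε, hεx⟩ : ∃ ε : ℝ, 0 < ε ∧ ∀ i, ε ≤ x i := by
    rcases isEmpty_or_nonempty (Fin m) with h | h
    · exact ⟨1, one_pos, fun i => h.elim i⟩
    · obtain ⟨i, hi⟩ := Finite.exists_min x
      exact ⟨x i, hpos i, hi⟩
  set v : Fin m → ℝ := fun i => √(-(∏ k, (x i - y k)) * Lagrange.nodalWeight Finset.univ x i) with hv
  have hv2 : ∀ i, v i * v i = -(∏ k, (x i - y k)) * Lagrange.nodalWeight Finset.univ x i :=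
    fun i => Real.mul_self_sqrt (hsign i)
  set A : H →L[ℂ] H := algebraMap ℝ (H →L[ℂ] H) ε + ∑ i, (x i - ε) • rankOne ℂ (e i) (e i) with hA
  set B : H →L[ℂ] H := A + rankOne ℂ (rvec e v) (rvec e v) with hB
  have hrank : ∀ w : H, (0 : H →L[ℂ] H) ≤ rankOne ℂ w w := fun w =>
    (nonneg_iff_isPositive _).2 (isPositive_rankOne_self w)
  have hεA : algebraMap ℝ (H →L[ℂ] H) ε ≤ A := by
    rw [hA]
    refine le_add_of_nonneg_right (Finset.sum_nonneg fun i _ => ?_)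
    exact smul_nonneg (sub_nonneg.mpr (hεx i)) (hrank _)
  have hAB : A ≤ B := le_add_of_nonneg_right (hrank _)
  have hAsa : IsSelfAdjoint A := IsSelfAdjoint.of_nonneg
    ((algebraMap_nonneg (H →L[ℂ] H) hε.le).trans hεA)
  have hBsa : IsSelfAdjoint B := IsSelfAdjoint.of_nonneg
    (((algebraMap_nonneg (H →L[ℂ] H) hε.le).trans hεA).trans hAB)
  obtain ⟨hA1, hA2⟩ := spec_of_le hAsa hε hεA
  obtain ⟨hB1, hB2⟩ := spec_of_le hBsa hε (hεA.trans hAB)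
  have hfAB := hmono A B hAsa hBsa hA2 hB2 ((le_def _ _).1 hAB)
  have hAe : ∀ i, A (e i) = (x i : ℂ) • e i := by
    intro i
    rw [hA, add_apply, Algebra.algebraMap_eq_smul_one, smul_apply, one_apply_eq_self,
      sum_apply, Finset.sum_eq_single i]
    · rw [smul_apply, rankOne_apply, inner_self_eq_norm_sq_to_K, he.1 i]
      have h3 : ∀ (r : ℝ) (w : H), r • w = (r : ℂ) • w := fun r w => (Complex.coe_smul r w).symm
      rw [h3, h3]
      simp only [RCLike.ofReal_one, one_pow, one_smul, Complex.ofReal_one, map_one]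
      rw [← add_smul]
      congr 1
      push_cast
      ring
    · intro k _ hk
      rw [smul_apply, rankOne_apply, he.2 hk]; simp
    · simp
  have hArv : ∀ a : Fin m → ℝ, A (rvec e a) = rvec e (fun i => x i * a i) := by
    intro a
    simp only [rvec, map_sum, map_smul, hAe, smul_smul]
    refine Finset.sum_congr rfl fun i _ => ?_
    push_cast; rw [mul_comm]
  -- eigenvectors of B
  set G : Fin m → Fin m → ℝ := fun j i => v i * (y j - x i)⁻¹ with hG
  have hne : ∀ i j, y j - x i ≠ 0 := fun i j => sub_ne_zero.mpr (hxy i j).symm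
  have hBG : ∀ j, B (rvec e (G j)) = (y j : ℂ) • rvec e (G j) := by
    intro j
    have h1 : ∑ i, v i * G j i = 1 := by
      rw [← secular hx hxy j]
      refine Finset.sum_congr rfl fun i _ => ?_
      rw [hG, ← hv2]; ring
    rw [hB, add_apply, hArv, rankOne_apply, rvec_inner he, h1]
    simp only [rvec, Complex.ofReal_one, one_smul, Finset.smul_sum, smul_smul,
      ← Finset.sum_add_distrib, ← add_smul]
    refine Finset.sum_congr rfl fun i _ => ?_
    congr 1
    have := hne i j
    rw [one_mul, ← Complex.ofReal_mul, ← Complex.ofReal_add]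
    congr 1
    simp only [hG]; field_simp; ring
  -- the test vector
  set u : Fin m → ℝ := fun i => v i * (b.eval (x i) / ∏ k, (x i - y k)) with hu
  set γ : Fin m → ℝ := fun j => -(Lagrange.nodalWeight Finset.univ y j * b.eval (y j)) with hγ
  have hprod : ∀ i, ∏ k, (x i - y k) ≠ 0 := fun i =>
    Finset.prod_ne_zero_iff.mpr fun k _ => sub_ne_zero.mpr (hxy i k)
  have huG : rvec e u = ∑ j, (γ j : ℂ) • rvec e (G j) := by
    simp only [rvec, Finset.smul_sum, smul_smul]
    rw [Finset.sum_comm]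
    refine Finset.sum_congr rfl fun i _ => ?_
    rw [← Finset.sum_smul]
    congr 1
    simp only [← Complex.ofReal_mul, ← Complex.ofReal_sum]
    congr 1
    have h2 := lagrange_sum hy hb (z := x i) (fun j => hxy i j)
    simp only [hu, ← h2, Finset.mul_sum]
    refine Finset.sum_congr rfl fun j _ => ?_
    simp only [hγ, hG]
    rw [← neg_sub (y j) (x i), inv_neg]; ring
  have hinG : ∀ j, inner ℂ (rvec e u) (rvec e (G j)) = ((-(b.eval (y j) / ∏ i, (y j - x i)) : ℝ) : ℂ) := by
    intro j
    rw [rvec_inner he, ← lagrange_sum hx hb (z := y j) (fun i => (hxy i j).symm),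
      ← Finset.sum_neg_distrib]
    congr 1
    refine Finset.sum_congr rfl fun i _ => ?_
    have : u i * G j i = (v i * v i) * (b.eval (x i) / ∏ k, (x i - y k)) * (y j - x i)⁻¹ := by
      simp only [hu, hG]; ring
    rw [this, hv2]
    have := hprod i
    field_simp
  have hfA : cfc f A (rvec e u) = rvec e (fun i => f (x i) * u i) := by
    simp only [rvec, map_sum, map_smul]
    refine Finset.sum_congr rfl fun i _ => ?_
    rw [cfc_eigen hAsa (hf.mono hA1) (hAe i), smul_smul]
    push_cast; rw [mul_comm]
  have hfB : inner ℂ (rvec e u) (cfc f B (rvec e u)) =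
      ((∑ j, γ j * f (y j) * (-(b.eval (y j) / ∏ i, (y j - x i))) : ℝ) : ℂ) := by
    have h5 : cfc f B (rvec e u) = ∑ j, (γ j : ℂ) • (f (y j) : ℂ) • rvec e (G j) := by
      rw [huG, map_sum]
      refine Finset.sum_congr rfl fun j _ => ?_
      rw [map_smul, cfc_eigen hBsa (hf.mono hB1) (hBG j)]
    rw [h5, inner_sum, Complex.ofReal_sum]
    refine Finset.sum_congr rfl fun j _ => ?_
    rw [inner_smul_right, inner_smul_right, hinG, Complex.ofReal_mul, Complex.ofReal_mul, mul_assoc]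
  have hfin := hfAB.re_inner_nonneg_right (rvec e u)
  rw [sub_apply, inner_sub_right, hfB, hfA, rvec_inner he, ← Complex.ofReal_sub] at hfin
  have hfin' : 0 ≤ (∑ j, γ j * f (y j) * (-(b.eval (y j) / ∏ i, (y j - x i)))) -
      ∑ i, u i * (f (x i) * u i) := by
    change 0 ≤ (Complex.ofReal _).re at hfin
    rwa [Complex.ofReal_re] at hfin
  convert hfin' using 1
  rw [sub_eq_add_neg, ← Finset.sum_neg_distrib]
  congr 1
  · refine Finset.sum_congr rfl fun j _ => ?_
    simp only [hγ]; ring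
  · refine Finset.sum_congr rfl fun i _ => ?_
    have : u i * (f (x i) * u i) = (v i * v i) * f (x i) * (b.eval (x i) / ∏ k, (x i - y k)) ^ 2 := by
      simp only [hu]; ring
    rw [this, hv2]
    have := hprod i
    field_simp

end Part3

section Part4

open ContinuousLinearMap MeasureTheory
variable {H : Type*} [NormedAddCommGroup H] [InnerProductSpace ℂ H] [CompleteSpace H]

noncomputable def wt (S : Finset ℝ) (x : ℝ) : ℝ := ∏ z ∈ S.erase x, (x - z)⁻¹

theorem loewner_fin (hinf : ¬ FiniteDimensional ℂ H) {f : ℝ → ℝ}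
    (hf : ContinuousOn f (Set.Ioi (0 : ℝ))) (hmono : OpMono H f) {m : ℕ} {S : Finset ℝ}
    (hS : S.card = 2 * m) (hpos : ∀ x ∈ S, 0 < x) {b : Polynomial ℝ} (hb : b.degree < m) :
    0 ≤ ∑ x ∈ S, f x * ((b.eval x) ^ 2 * wt S x) := by
  classical
  set s := S.orderEmbOfFin hS with hs
  have hmem : ∀ k, s k ∈ S := fun k => S.orderEmbOfFin_mem hS k
  set x : Fin m → ℝ := fun i => s ⟨2 * i, by omega⟩ with hxd
  set y : Fin m → ℝ := fun i => s ⟨2 * i + 1, by omega⟩ with hyd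
  have hx : Function.Injective x := by
    intro i j h
    have := s.injective h
    simp only [Fin.mk.injEq] at this
    ext; omega
  have hy : Function.Injective y := by
    intro i j h
    have := s.injective h
    simp only [Fin.mk.injEq] at this
    ext; omega
  have hxy : ∀ i j, x i ≠ y j := by
    intro i j h
    have := s.injective h
    simp only [Fin.mk.injEq] at this
    omega
  have hxlt : ∀ i j, i < j → x i < x j := by
    intro i j h
    apply s.strictMono
    simp only [Fin.mk_lt_mk]
    have : (i : ℕ) < j := h
    omega
  have hxylt : ∀ i j, i ≤ j → x i < y j := by
    intro i j h
    apply s.strictMono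
    simp only [Fin.mk_lt_mk]
    have : (i : ℕ) ≤ j := h
    omega
  have hyxlt : ∀ i j, i < j → y i < x j := by
    intro i j h
    apply s.strictMono
    simp only [Fin.mk_lt_mk]
    have : (i : ℕ) < j := h
    omega
  have hsign : ∀ i, 0 ≤ -(∏ k, (x i - y k)) * Lagrange.nodalWeight Finset.univ x i := by
    intro i
    rw [Lagrange.nodalWeight, ← Finset.mul_prod_erase Finset.univ _ (Finset.mem_univ i),
      ← neg_mul, mul_assoc, ← Finset.prod_mul_distrib]
    refine mul_nonneg ?_ (Finset.prod_nonneg fun k hk => ?_)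
    · linarith [hxylt i i le_rfl]
    · rcases lt_or_gt_of_ne (Finset.ne_of_mem_erase hk) with h | h
      · have h1 := hyxlt k i h
        have h2 := hxlt k i h
        exact mul_nonneg (by linarith) (inv_nonneg.mpr (by linarith))
      · have h1 := hxylt i k h.le
        have h2 := hxlt i k h
        exact mul_nonneg_of_nonpos_of_nonpos (by linarith) (inv_nonpos.mpr (by linarith))
  have key := loewner_core hinf hf hmono (fun i => hpos _ (hmem _)) hx hy hxy hsign hb
  set X := Finset.univ.image x with hX
  set Y := Finset.univ.image y with hY
  have hdis : Disjoint X Y := by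
    rw [Finset.disjoint_left]
    intro z h1 h2
    obtain ⟨i, -, rfl⟩ := Finset.mem_image.1 h1
    obtain ⟨j, -, h⟩ := Finset.mem_image.1 h2
    exact hxy i j h.symm
  have hXY : X ∪ Y = S := by
    apply Finset.eq_of_subset_of_card_le
    · intro z hz
      rcases Finset.mem_union.1 hz with h | h
      · obtain ⟨i, -, rfl⟩ := Finset.mem_image.1 h
        exact hmem _
      · obtain ⟨i, -, rfl⟩ := Finset.mem_image.1 h
        exact hmem _
    · rw [Finset.card_union_of_disjoint hdis, Finset.card_image_of_injective _ hx,
        Finset.card_image_of_injective _ hy, hS, Finset.card_univ, Fintype.card_fin]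
      omega
  have hwx : ∀ i, wt S (x i) = Lagrange.nodalWeight Finset.univ x i / ∏ j, (x i - y j) := by
    intro i
    have h1 : S.erase (x i) = (Finset.univ.erase i).image x ∪ Y := by
      rw [← hXY, Finset.erase_union_distrib, Finset.image_erase hx]
      congr 1
      apply Finset.erase_eq_of_notMem
      intro h
      obtain ⟨j, -, h⟩ := Finset.mem_image.1 h
      exact hxy i j h.symm
    rw [wt, h1, Finset.prod_union, Finset.prod_image hx.injOn, Finset.prod_image hy.injOn,
      Finset.prod_inv_distrib (s := Finset.univ), Lagrange.nodalWeight, div_eq_mul_inv]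
    exact hdis.mono_left (Finset.image_subset_image (Finset.erase_subset _ _))
  have hwy : ∀ i, wt S (y i) = Lagrange.nodalWeight Finset.univ y i / ∏ j, (y i - x j) := by
    intro i
    have h1 : S.erase (y i) = (Finset.univ.erase i).image y ∪ X := by
      rw [← hXY, Finset.union_comm, Finset.erase_union_distrib, Finset.image_erase hy]
      congr 1
      apply Finset.erase_eq_of_notMem
      intro h
      obtain ⟨j, -, h⟩ := Finset.mem_image.1 h
      exact hxy j i h
    rw [wt, h1, Finset.prod_union, Finset.prod_image hx.injOn, Finset.prod_image hy.injOn,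
      Finset.prod_inv_distrib (s := Finset.univ), Lagrange.nodalWeight, div_eq_mul_inv]
    exact hdis.symm.mono_left (Finset.image_subset_image (Finset.erase_subset _ _))
  have hsum : ∑ z ∈ S, f z * ((b.eval z) ^ 2 * wt S z) =
      ∑ z ∈ X ∪ Y, f z * ((b.eval z) ^ 2 * wt S z) := by rw [hXY]
  rw [hsum, Finset.sum_union hdis, Finset.sum_image hx.injOn, Finset.sum_image hy.injOn, add_comm]
  convert key using 3
  · rename_i i _
    rw [hwy]; ring
  · rename_i i _
    rw [hwx]; ring

end Part4

section Part5

open ContinuousLinearMap MeasureTheory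
variable {H : Type*} [NormedAddCommGroup H] [InnerProductSpace ℂ H] [CompleteSpace H]

theorem wt_insert_ne {S : Finset ℝ} {a x : ℝ} (ha : a ∉ S) (hx : x ≠ a) :
    wt (insert a S) x = (x - a)⁻¹ * wt S x := by
  rw [wt, wt, Finset.erase_insert_of_ne hx.symm, Finset.prod_insert]
  exact fun h => ha (Finset.mem_of_mem_erase h)

theorem wt_insert_self {S : Finset ℝ} {a : ℝ} (ha : a ∉ S) :
    wt (insert a S) a = ∏ z ∈ S, (a - z)⁻¹ := by
  rw [wt, Finset.erase_insert ha]

theorem growth (hinf : ¬ FiniteDimensional ℂ H) {f : ℝ → ℝ}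
    (hf : ContinuousOn f (Set.Ioi (0 : ℝ))) (hmono : OpMono H f) (hnn : ∀ x, 0 < x → 0 ≤ f x)
    {t : ℝ} (ht : 1 < t) : f t ≤ 4 * f 1 * t := by
  have n1 : (1/2 : ℝ) ∉ ({1, t, 2 * t} : Finset ℝ) := by
    simp only [Finset.mem_insert, Finset.mem_singleton, not_or]
    refine ⟨by norm_num, ?_, ?_⟩ <;> intro h <;> linarith
  have n2 : (1 : ℝ) ∉ ({t, 2 * t} : Finset ℝ) := by
    simp only [Finset.mem_insert, Finset.mem_singleton, not_or]
    refine ⟨?_, ?_⟩ <;> intro h <;> linarith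
  have n3 : t ∉ ({2 * t} : Finset ℝ) := by
    simp only [Finset.mem_singleton]
    intro h; linarith
  have hdeg : (Polynomial.X - Polynomial.C (2 * t)).degree < ((2 : ℕ) : WithBot ℕ) := by
    rw [Polynomial.degree_X_sub_C]; norm_num
  have h := loewner_fin hinf hf hmono (m := 2) (S := {1/2, 1, t, 2 * t})
    (by rw [Finset.card_insert_of_notMem n1, Finset.card_insert_of_notMem n2,
      Finset.card_insert_of_notMem n3, Finset.card_singleton])
    (by
      intro x hx
      simp only [Finset.mem_insert, Finset.mem_singleton] at hx
      rcases hx with rfl | rfl | rfl | rfl <;> linarith) hdeg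
  rw [Finset.sum_insert n1, Finset.sum_insert n2, Finset.sum_insert n3, Finset.sum_singleton,
    wt_insert_self n1, wt_insert_ne n1 (by norm_num), wt_insert_self n2,
    wt_insert_ne n1 (by linarith), wt_insert_ne n2 (by linarith), wt_insert_self n3] at h
  simp only [Polynomial.eval_sub, Polynomial.eval_X, Polynomial.eval_C, sub_self] at h
  rw [Finset.prod_insert n2, Finset.prod_insert n3, Finset.prod_singleton, Finset.prod_insert n3,
    Finset.prod_singleton] at h
  have a1 : 0 < t - 1 := by linarith
  have a2 : 0 < 2 * t - 1 := by linarith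
  have e1 : f (1/2) * ((1/2 - 2*t)^2 * ((1/2 - 1)⁻¹ * ((1/2 - t)⁻¹ * (1/2 - 2*t)⁻¹))) ≤ 0 := by
    refine mul_nonpos_of_nonneg_of_nonpos (hnn _ (by norm_num)) ?_
    refine mul_nonpos_of_nonneg_of_nonpos (sq_nonneg _) ?_
    refine mul_nonpos_of_nonpos_of_nonneg (by norm_num) ?_
    exact mul_nonneg_of_nonpos_of_nonpos (inv_nonpos.mpr (by linarith)) (inv_nonpos.mpr (by linarith))
  have e2 : f 1 * ((1 - 2*t)^2 * ((1 - 1/2)⁻¹ * ((1 - t)⁻¹ * (1 - 2*t)⁻¹))) =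
      2 * f 1 * (2 * t - 1) / (t - 1) := by
    have : (1 - t) ≠ 0 := by linarith
    have : (1 - 2 * t) ≠ 0 := by linarith
    have : (t - 1) ≠ 0 := by linarith
    field_simp
    ring
  have e3 : f t * ((t - 2*t)^2 * ((t - 1/2)⁻¹ * ((t - 1)⁻¹ * ∏ z ∈ {2*t}, (t - z)⁻¹))) =
      - (2 * f t * t / ((2 * t - 1) * (t - 1))) := by
    rw [Finset.prod_singleton]
    have : (t - 1/2) ≠ 0 := by linarith
    have : (2 * t - 1) ≠ 0 := by linarith
    have : (t - 1) ≠ 0 := by linarith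
    have : (t - 2 * t) ≠ 0 := by linarith
    have : t ≠ 0 := by linarith
    field_simp
    ring
  have h' : 2 * f t * t / ((2 * t - 1) * (t - 1)) ≤ 2 * f 1 * (2 * t - 1) / (t - 1) := by
    linarith
  rw [div_le_div_iff₀ (by positivity) a1] at h'
  have h2 : f t * t ≤ f 1 * (2 * t - 1) ^ 2 := by
    have := le_of_mul_le_mul_right (a := t - 1) (b := 2 * (f t * t)) (c := 2 * (f 1 * (2 * t - 1) ^ 2))
      (by nlinarith) a1
    linarith
  have h3 : (2 * t - 1) ^ 2 ≤ 4 * t * t := by nlinarith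
  have h4 := mul_le_mul_of_nonneg_left h3 (hnn 1 one_pos)
  exact le_of_mul_le_mul_right (by nlinarith) (show 0 < t by linarith)

end Part5

section Part6

open ContinuousLinearMap MeasureTheory Filter Topology
variable {H : Type*} [NormedAddCommGroup H] [InnerProductSpace ℂ H] [CompleteSpace H]

theorem prod_neg_even {X : Finset ℝ} {m : ℕ} (hX : X.card = 2 * m) (y : ℝ) :
    ∏ x ∈ X, (y - x)⁻¹ = ∏ x ∈ X, (x - y)⁻¹ := by
  have : ∀ x ∈ X, (y - x)⁻¹ = (-1) * (x - y)⁻¹ := fun x _ => by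
    rw [← neg_sub x y, inv_neg]; ring
  rw [Finset.prod_congr rfl this, Finset.prod_mul_distrib, Finset.prod_const, hX, pow_mul]
  simp

theorem sq_case (hinf : ¬ FiniteDimensional ℂ H) {f : ℝ → ℝ}
    (hf : ContinuousOn f (Set.Ioi (0 : ℝ))) (hmono : OpMono H f) (hnn : ∀ x, 0 < x → 0 ≤ f x)
    {X : Finset ℝ} {m : ℕ} (hX : X.card = 2 * m) (hpos : ∀ x ∈ X, 0 < x)
    {a : Polynomial ℝ} (ha : 2 * a.natDegree < 2 * m) :
    0 ≤ -∑ x ∈ X, f x / x * ((a.eval x) ^ 2 * wt X x) := by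
  have hR : Tendsto (fun z : ℝ => 4 * f 1 * (z / (z - z⁻¹)) *
      ((Polynomial.X * a ^ 2).eval z / (Lagrange.nodal X id).eval z)) atTop (𝓝 (4 * f 1 * 1 * 0)) := by
    refine Tendsto.mul (tendsto_const_nhds.mul ?_) ?_
    · have h1 : Tendsto (fun z : ℝ => (1 - z⁻¹ * z⁻¹)⁻¹) atTop (𝓝 (1 - 0 * 0)⁻¹) := by
        refine Tendsto.inv₀ (tendsto_const_nhds.sub
          (tendsto_inv_atTop_zero.mul tendsto_inv_atTop_zero)) (by norm_num)
      simp only [mul_zero, sub_zero, inv_one] at h1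
      refine h1.congr' ?_
      filter_upwards [eventually_gt_atTop 1] with z hz
      have h0 : z ≠ 0 := by linarith
      have h2 : z ^ 2 - 1 ≠ 0 := by nlinarith
      have h3 : z - z⁻¹ = (z ^ 2 - 1) / z := by field_simp
      have h4 : 1 - z⁻¹ * z⁻¹ = (z ^ 2 - 1) / z ^ 2 := by field_simp
      rw [h3, h4]
      field_simp
    · apply Polynomial.div_tendsto_atTop_zero_of_degree_lt
      rw [Lagrange.degree_nodal, hX]
      refine Polynomial.degree_le_natDegree.trans_lt ?_
      have : (Polynomial.X * a ^ 2).natDegree ≤ 1 + 2 * a.natDegree := by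
        refine Polynomial.natDegree_mul_le.trans ?_
        gcongr
        · exact Polynomial.natDegree_X_le
        · exact Polynomial.natDegree_pow_le
      exact_mod_cast this.trans_lt (by omega)
  have hT : Tendsto (fun z : ℝ => ∑ x ∈ X, f x * ((a.eval x) ^ 2 *
      ((x - z⁻¹)⁻¹ * (z * (x - z)⁻¹) * wt X x))) atTop
      (𝓝 (∑ x ∈ X, f x * ((a.eval x) ^ 2 * ((x - 0)⁻¹ * (-1) * wt X x)))) := by
    refine tendsto_finsetSum _ fun x hx => ?_
    refine tendsto_const_nhds.mul (tendsto_const_nhds.mul (Tendsto.mul (Tendsto.mul ?_ ?_)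
      tendsto_const_nhds))
    · refine Tendsto.inv₀ (tendsto_const_nhds.sub tendsto_inv_atTop_zero) ?_
      have := hpos x hx; simp [this.ne']
    · have h1 : Tendsto (fun z : ℝ => (x * z⁻¹ - 1)⁻¹) atTop (𝓝 (x * 0 - 1)⁻¹) :=
        ((tendsto_const_nhds.mul tendsto_inv_atTop_zero).sub tendsto_const_nhds).inv₀ (by norm_num)
      have e : (x * 0 - 1 : ℝ)⁻¹ = -1 := by norm_num
      rw [e] at h1
      refine h1.congr' ?_
      filter_upwards [eventually_gt_atTop 0, eventually_gt_atTop x] with z hz hz2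
      have h4 : x * z⁻¹ - 1 = (x - z) / z := by field_simp
      rw [h4, inv_div, div_eq_mul_inv]
  have hlim := hR.add hT
  have e : 4 * f 1 * 1 * 0 + ∑ x ∈ X, f x * ((a.eval x) ^ 2 * ((x - 0)⁻¹ * (-1) * wt X x)) =
      -∑ x ∈ X, f x / x * ((a.eval x) ^ 2 * wt X x) := by
    rw [mul_zero, zero_add, ← Finset.sum_neg_distrib]
    refine Finset.sum_congr rfl fun x _ => ?_
    rw [sub_zero]; ring
  rw [e] at hlim
  refine ge_of_tendsto hlim ?_
  have ev1 : ∀ᶠ z : ℝ in atTop, ∀ x ∈ X, x < z := by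
    rw [Finset.eventually_all]
    exact fun x _ => eventually_gt_atTop x
  have ev2 : ∀ᶠ z : ℝ in atTop, ∀ x ∈ X, z⁻¹ < x := by
    rw [Finset.eventually_all]
    exact fun x hx => tendsto_inv_atTop_zero.eventually_lt_const (hpos x hx)
  filter_upwards [ev1, ev2, eventually_gt_atTop 1] with z h1 h2 hz
  have hz0 : 0 < z := by linarith
  have hzi : z⁻¹ < z := (inv_lt_one_of_one_lt₀ hz).trans hz
  have nz : z ∉ X := fun h => lt_irrefl _ (h1 z h)
  have ny : z⁻¹ ∉ insert z X := by
    rw [Finset.mem_insert, not_or]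
    exact ⟨hzi.ne, fun h => lt_irrefl _ (h2 _ h)⟩
  have ny' : z⁻¹ ∉ X := fun h => ny (Finset.mem_insert_of_mem h)
  have hdeg : a.degree < ((m + 1 : ℕ) : WithBot ℕ) := by
    refine Polynomial.degree_le_natDegree.trans_lt ?_
    exact_mod_cast (by omega)
  have h := loewner_fin hinf hf hmono (m := m + 1) (S := insert z⁻¹ (insert z X))
    (by rw [Finset.card_insert_of_notMem ny, Finset.card_insert_of_notMem nz, hX]; ring)
    (by
      intro x hx
      simp only [Finset.mem_insert] at hx
      rcases hx with rfl | rfl | hx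
      · positivity
      · exact hz0
      · exact hpos x hx) hdeg
  rw [Finset.sum_insert ny, Finset.sum_insert nz, wt_insert_self ny, wt_insert_ne ny hzi.ne',
    wt_insert_self nz, Finset.prod_insert nz, prod_neg_even hX] at h
  have e1 : f z⁻¹ * ((a.eval z⁻¹) ^ 2 * ((z⁻¹ - z)⁻¹ * ∏ x ∈ X, (x - z⁻¹)⁻¹)) ≤ 0 := by
    refine mul_nonpos_of_nonneg_of_nonpos (hnn _ (by positivity)) ?_
    refine mul_nonpos_of_nonneg_of_nonpos (sq_nonneg _) ?_
    refine mul_nonpos_of_nonpos_of_nonneg (inv_nonpos.mpr (by linarith)) ?_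
    exact Finset.prod_nonneg fun x hx => inv_nonneg.mpr (by linarith [h2 x hx])
  have hP : 0 ≤ ∏ x ∈ X, (z - x)⁻¹ :=
    Finset.prod_nonneg fun x hx => inv_nonneg.mpr (by linarith [h1 x hx])
  have e2 : z * (f z * ((a.eval z) ^ 2 * ((z - z⁻¹)⁻¹ * ∏ x ∈ X, (z - x)⁻¹))) ≤
      4 * f 1 * (z / (z - z⁻¹)) *
      ((Polynomial.X * a ^ 2).eval z / (Lagrange.nodal X id).eval z) := by
    rw [Lagrange.eval_nodal]
    simp only [Polynomial.eval_mul, Polynomial.eval_pow, Polynomial.eval_X, id]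
    rw [div_eq_mul_inv, div_eq_mul_inv, ← Finset.prod_inv_distrib]
    have hg := growth hinf hf hmono hnn hz
    have hK : 0 ≤ z * (a.eval z) ^ 2 * ((z - z⁻¹)⁻¹ * ∏ x ∈ X, (z - x)⁻¹) := by
      refine mul_nonneg (by positivity) (mul_nonneg (inv_nonneg.mpr (by linarith)) hP)
    have := mul_le_mul_of_nonneg_right hg hK
    linarith
  have e3 : ∑ x ∈ X, f x * ((a.eval x) ^ 2 * ((x - z⁻¹)⁻¹ * (z * (x - z)⁻¹) * wt X x)) =
      z * ∑ x ∈ X, f x * ((a.eval x) ^ 2 * wt (insert z⁻¹ (insert z X)) x) := by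
    rw [Finset.mul_sum]
    refine Finset.sum_congr rfl fun x hx => ?_
    rw [wt_insert_ne ny (h2 x hx).ne', wt_insert_ne nz (h1 x hx).ne]
    ring
  rw [e3]
  have := mul_nonneg hz0.le h
  nlinarith [mul_nonpos_of_nonneg_of_nonpos hz0.le e1]

theorem Q_nonneg (hinf : ¬ FiniteDimensional ℂ H) {f : ℝ → ℝ}
    (hf : ContinuousOn f (Set.Ioi (0 : ℝ))) (hmono : OpMono H f) (hnn : ∀ x, 0 < x → 0 ≤ f x)
    {X : Finset ℝ} {m : ℕ} (hX : X.card = 2 * m) (hpos : ∀ x ∈ X, 0 < x)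
    {n : ℕ} {p : Polynomial ℝ} (hp : SOSP n p) (hn : n < 2 * m) :
    0 ≤ -∑ x ∈ X, f x / x * (p.eval x * wt X x) := by
  induction hp with
  | sq a h =>
    simpa using sq_case hinf hf hmono hnn hX hpos (a := a) (by omega)
  | xsq b h =>
    have hdeg : b.degree < (m : WithBot ℕ) := by
      refine Polynomial.degree_le_natDegree.trans_lt ?_
      exact_mod_cast (by omega)
    have := loewner_fin hinf hf hmono hX hpos hdeg
    convert this using 1
    rw [← Finset.sum_neg_distrib]
    refine Finset.sum_congr rfl fun x hx => ?_
    have := (hpos x hx).ne'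
    simp only [Polynomial.eval_neg, Polynomial.eval_mul, Polynomial.eval_pow, Polynomial.eval_X]
    field_simp
  | add p q hp hq ihp ihq =>
    have := add_nonneg ihp ihq
    refine this.trans_eq ?_
    rw [← neg_add, ← Finset.sum_add_distrib]
    congr 1
    refine Finset.sum_congr rfl fun x hx => ?_
    rw [Polynomial.eval_add]; ring

theorem pos_even (hinf : ¬ FiniteDimensional ℂ H) {f : ℝ → ℝ}
    (hf : ContinuousOn f (Set.Ioi (0 : ℝ))) (hmono : OpMono H f) (hnn : ∀ x, 0 < x → 0 ≤ f x)
    {X : Finset ℝ} {m : ℕ} (hX : X.card = 2 * m) (hpos : ∀ x ∈ X, 0 < x) (c : ℝ → ℝ)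
    (hc : ∀ s : ℝ, 0 ≤ s → s ≤ 1 → 0 ≤ ∑ x ∈ X, c x * (x / ((1 - s) * x + s))) :
    0 ≤ ∑ x ∈ X, c x * f x := by
  rcases Nat.eq_zero_or_pos m with rfl | hm
  · have h0 : X = ∅ := Finset.card_eq_zero.mp (by simpa using hX)
    simp [h0]
  set p : Polynomial ℝ := ∑ x ∈ X, Polynomial.C (c x * x) *
    ∏ z ∈ X.erase x, (Polynomial.C z - Polynomial.X) with hp
  have hev : ∀ t, p.eval t = ∑ x ∈ X, c x * x * ∏ z ∈ X.erase x, (z - t) := by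
    intro t
    simp [hp, Polynomial.eval_finsetSum, Polynomial.eval_prod]
  have hdeg : p.natDegree < 2 * m := by
    have : p.natDegree ≤ 2 * m - 1 := by
      refine Polynomial.natDegree_sum_le_of_forall_le _ _ fun x hx => ?_
      refine Polynomial.natDegree_C_mul_le _ _ |>.trans ?_
      refine (Polynomial.natDegree_prod_le _ _).trans ?_
      refine (Finset.sum_le_card_nsmul _ _ 1 fun z _ => ?_).trans ?_
      · rw [← Polynomial.natDegree_neg, neg_sub]
        exact Polynomial.natDegree_X_sub_C_le _
      · rw [Finset.card_erase_of_mem hx, hX]; simp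
    omega
  have hnnp : ∀ t < 0, 0 ≤ p.eval t := by
    intro t ht
    have h1 : 0 < 1 - t := by linarith
    have h := hc (-t / (1 - t)) (by apply div_nonneg <;> linarith)
      (by rw [div_le_one h1]; linarith)
    have hpp : 0 ≤ ∏ z ∈ X, (z - t) := Finset.prod_nonneg fun z hz => by linarith [hpos z hz]
    have h2 : p.eval t = (1 - t)⁻¹ * (∏ z ∈ X, (z - t)) *
        ∑ x ∈ X, c x * (x / ((1 - (-t / (1 - t))) * x + (-t / (1 - t)))) := by
      rw [hev, Finset.mul_sum]
      refine Finset.sum_congr rfl fun x hx => ?_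
      rw [← Finset.mul_prod_erase X _ hx]
      have h3 : (1 - (-t / (1 - t))) * x + (-t / (1 - t)) = (x - t) / (1 - t) := by
        field_simp; ring
      rw [h3]
      have : x - t ≠ 0 := by linarith [hpos x hx]
      field_simp
    rw [h2]
    exact mul_nonneg (mul_nonneg (by positivity) hpp) h
  have := Q_nonneg hinf hf hmono hnn hX hpos (SOSP.of_nonneg _ p rfl hnnp) hdeg
  convert this using 1
  rw [← Finset.sum_neg_distrib]
  refine Finset.sum_congr rfl fun x hx => ?_
  have h5 : p.eval x = c x * x * ∏ z ∈ X.erase x, (z - x) := by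
    rw [hev, Finset.sum_eq_single x]
    · intro w hw hwx
      rw [Finset.prod_eq_zero (i := x)]
      · ring
      · exact Finset.mem_erase.2 ⟨hwx.symm, hx⟩
      · ring
    · exact fun h => absurd hx h
  have h6 : (∏ z ∈ X.erase x, (z - x)) * wt X x = -1 := by
    rw [wt, ← Finset.prod_mul_distrib]
    have : ∀ z ∈ X.erase x, (z - x) * (x - z)⁻¹ = -1 := by
      intro z hz
      have := sub_ne_zero.mpr (Finset.ne_of_mem_erase hz).symm
      rw [← neg_sub x z]; field_simp
    rw [Finset.prod_congr rfl this, Finset.prod_const, Finset.card_erase_of_mem hx, hX]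
    exact Odd.neg_one_pow ⟨m - 1, by omega⟩
  rw [h5]
  have := (hpos x hx).ne'
  rw [mul_assoc, h6]
  field_simp

theorem pos_all (hinf : ¬ FiniteDimensional ℂ H) {f : ℝ → ℝ}
    (hf : ContinuousOn f (Set.Ioi (0 : ℝ))) (hmono : OpMono H f) (hnn : ∀ x, 0 < x → 0 ≤ f x)
    {X : Finset ℝ} (hpos : ∀ x ∈ X, 0 < x) (c : ℝ → ℝ)
    (hc : ∀ s : ℝ, 0 ≤ s → s ≤ 1 → 0 ≤ ∑ x ∈ X, c x * (x / ((1 - s) * x + s))) :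
    0 ≤ ∑ x ∈ X, c x * f x := by
  rcases Nat.even_or_odd' X.card with ⟨m, hm | hm⟩
  · exact pos_even hinf hf hmono hnn hm hpos c hc
  · obtain ⟨y, hy, hyX⟩ := (Set.Ioi_infinite (0 : ℝ)).exists_notMem_finset X
    set c' : ℝ → ℝ := Function.update c y 0 with hc'
    have hcc : ∀ g : ℝ → ℝ, ∑ x ∈ insert y X, c' x * g x = ∑ x ∈ X, c x * g x := by
      intro g
      rw [Finset.sum_insert hyX, hc', Function.update_self, zero_mul, zero_add]
      refine Finset.sum_congr rfl fun x hx => ?_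
      rw [Function.update_of_ne]
      rintro rfl; exact hyX hx
    have := pos_even hinf hf hmono hnn (X := insert y X) (m := m + 1)
      (by rw [Finset.card_insert_of_notMem hyX, hm]; ring)
      (by
        intro x hx
        rcases Finset.mem_insert.1 hx with rfl | h
        · exact hy
        · exact hpos x h) c' (by
        intro s h0 h1
        rw [hcc]; exact hc s h0 h1)
    rwa [hcc] at this

end Part6

section Part7

open MeasureTheory

abbrev UI := Set.Icc (0 : ℝ) 1

theorem den_pos {x s : ℝ} (hx : 0 < x) (h0 : 0 ≤ s) (h1 : s ≤ 1) : 0 < (1 - s) * x + s := by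
  rcases h0.lt_or_eq with h | rfl
  · have := mul_nonneg (sub_nonneg.mpr h1) hx.le
    linarith
  · simpa using hx

noncomputable def kx (x : {x : ℝ // 0 < x}) : C(UI, ℝ) where
  toFun s := x.1 / ((1 - s.1) * x.1 + s.1)
  continuous_toFun := by
    refine Continuous.div (by fun_prop) (by fun_prop) fun s => ?_
    exact (den_pos x.2 s.2.1 s.2.2).ne'

theorem exists_nu {f : ℝ → ℝ}
    (hpos : ∀ (X : Finset ℝ), (∀ x ∈ X, 0 < x) → ∀ (c : ℝ → ℝ),
      (∀ s : ℝ, 0 ≤ s → s ≤ 1 → 0 ≤ ∑ x ∈ X, c x * (x / ((1 - s) * x + s))) →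
      0 ≤ ∑ x ∈ X, c x * f x) :
    ∃ ν : Measure UI, IsFiniteMeasure ν ∧
      ∀ x : ℝ, 0 < x → f x = ∫ s : UI, x / ((1 - s.1) * x + s.1) ∂ν := by
  set Φ : ({x : ℝ // 0 < x} →₀ ℝ) →ₗ[ℝ] C(UI, ℝ) := Finsupp.linearCombination ℝ kx with hΦ
  set L : ({x : ℝ // 0 < x} →₀ ℝ) →ₗ[ℝ] ℝ := Finsupp.linearCombination ℝ (fun x => f x.1) with hL
  have hLpos : ∀ c, 0 ≤ Φ c → 0 ≤ L c := by
    intro c hc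
    have key : ∀ g : ℝ → ℝ, ∑ y ∈ c.support.map (Function.Embedding.subtype _),
        (if h : 0 < y then c ⟨y, h⟩ else 0) * g y = ∑ x ∈ c.support, c x * g x.1 := by
      intro g
      rw [Finset.sum_map]
      refine Finset.sum_congr rfl fun x _ => ?_
      simp [x.2]
    have := hpos (c.support.map (Function.Embedding.subtype _)) (by
      intro x hx
      obtain ⟨y, -, rfl⟩ := Finset.mem_map.1 hx
      exact y.2) (fun y => if h : 0 < y then c ⟨y, h⟩ else 0) (by
      intro s h0 h1
      rw [key (fun x => x / ((1 - s) * x + s))]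
      have h2 : 0 ≤ (Φ c) (⟨s, Set.mem_Icc.mpr ⟨h0, h1⟩⟩ : UI) := hc _
      rw [hΦ, Finsupp.linearCombination_apply, Finsupp.sum, ContinuousMap.coe_sum,
        Finset.sum_apply] at h2
      exact h2)
    rw [key f] at this
    rw [hL, Finsupp.linearCombination_apply, Finsupp.sum]
    simpa using this
  have hLker : ∀ c, Φ c = 0 → L c = 0 := by
    intro c hc
    have h1 := hLpos c hc.ge
    have h2 := hLpos (-c) (by rw [map_neg, hc, neg_zero])
    rw [map_neg] at h2
    linarith
  obtain ⟨r, hr⟩ := Φ.rangeRestrict.exists_rightInverse_of_surjective Φ.range_rangeRestrict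
  have hr' : ∀ y, Φ (r y) = y := fun y => congrArg Subtype.val (LinearMap.congr_fun hr y)
  let F : C(UI, ℝ) →ₗ.[ℝ] ℝ := ⟨LinearMap.range Φ, L ∘ₗ r⟩
  have hone : Φ (Finsupp.single ⟨1, one_pos⟩ 1) = 1 := by
    rw [hΦ, Finsupp.linearCombination_single, one_smul]
    ext s
    simp [kx]
  obtain ⟨g, hg1, hg2⟩ := riesz_extension (PointedCone.positive ℝ C(UI, ℝ)) F
    (by
      intro x hx
      have hx' : (0 : C(UI, ℝ)) ≤ x := by simpa using hx
      refine hLpos _ ?_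
      rw [hr']; exact hx')
    (by
      intro y
      refine ⟨⟨Φ (Finsupp.single ⟨1, one_pos⟩ ‖y‖), LinearMap.mem_range_self _ _⟩, ?_⟩
      have : Φ (Finsupp.single ⟨1, one_pos⟩ ‖y‖) = ‖y‖ • (1 : C(UI, ℝ)) := by
        rw [← hone, ← map_smul, Finsupp.smul_single, smul_eq_mul, mul_one]
      rw [PointedCone.mem_positive]
      intro s
      simp only [this]
      have h3 := neg_abs_le (y s)
      have h4 := y.norm_coe_le_norm s
      rw [Real.norm_eq_abs] at h4
      simp
      linarith)
  let Λ : CompactlySupportedContinuousMap UI ℝ →ₚ[ℝ] ℝ := PositiveLinearMap.mk₀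
    { toFun := fun φ => g (φ : C(UI, ℝ))
      map_add' := fun φ ψ => by
        rw [← map_add]; rfl
      map_smul' := fun a φ => by
        rw [RingHom.id_apply, ← map_smul]; rfl }
    (by
      intro φ hφ
      refine hg2 _ ?_
      rw [PointedCone.mem_positive]
      exact fun s => hφ s)
  refine ⟨RealRMK.rieszMeasure Λ, inferInstance, fun x hx => ?_⟩
  have h := RealRMK.integral_rieszMeasure Λ
    (CompactlySupportedContinuousMap.continuousMapEquiv (kx ⟨x, hx⟩))
  have h5 : Λ (CompactlySupportedContinuousMap.continuousMapEquiv (kx ⟨x, hx⟩)) =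
    g (kx ⟨x, hx⟩) := rfl
  have h6 : Φ (Finsupp.single ⟨x, hx⟩ 1) = kx ⟨x, hx⟩ := by
    rw [hΦ, Finsupp.linearCombination_single, one_smul]
  have h7 : g (kx ⟨x, hx⟩) = f x := by
    rw [← h6]
    have := hg1 ⟨Φ (Finsupp.single ⟨x, hx⟩ 1), LinearMap.mem_range_self _ _⟩
    rw [this]
    change L (r _) = f x
    have h8 := hLker (r ⟨Φ (Finsupp.single ⟨x, hx⟩ 1), LinearMap.mem_range_self _ _⟩ -
      Finsupp.single ⟨x, hx⟩ 1) (by rw [map_sub, hr', sub_self])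
    rw [map_sub, sub_eq_zero] at h8
    rw [h8, hL, Finsupp.linearCombination_single, one_smul]
  rw [← h7, ← h5, ← h]
  rfl

theorem nu_to_mu {f : ℝ → ℝ} (ν : Measure UI) [IsFiniteMeasure ν]
    (h : ∀ x : ℝ, 0 < x → f x = ∫ s : UI, x / ((1 - s.1) * x + s.1) ∂ν) :
    ∃ (α β : ℝ) (μ : Measure ℝ), 0 ≤ α ∧ 0 ≤ β ∧ μ (Set.Ioi (0 : ℝ))ᶜ = 0 ∧
      Integrable (fun l : ℝ => (1 + l)⁻¹) μ ∧
      ∀ x : ℝ, 0 < x → f x = α + β * x + ∫ l, x / (x + l) ∂μ := by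
  set z0 : UI := ⟨0, by simp⟩ with hz0
  set z1 : UI := ⟨1, by simp⟩ with hz1
  set J : Set UI := {z0, z1}ᶜ with hJ
  have hJm : MeasurableSet J := (Set.toFinite _).measurableSet.compl
  have hJ' : ∀ s ∈ J, 0 < s.1 ∧ s.1 < 1 := by
    intro s hs
    simp only [hJ, Set.mem_compl_iff, Set.mem_insert_iff, Set.mem_singleton_iff, not_or] at hs
    refine ⟨lt_of_le_of_ne s.2.1 fun h => hs.1 (Subtype.ext h.symm),
      lt_of_le_of_ne s.2.2 fun h => hs.2 (Subtype.ext h)⟩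
  set φ : UI → ℝ := fun s => s.1 / (1 - s.1) with hφ
  set d : UI → NNReal := fun s => Real.toNNReal (1 - s.1)⁻¹ with hd
  have hφm : Measurable φ := by
    rw [hφ]; fun_prop
  have hdm : Measurable d := by
    rw [hd]; fun_prop
  set μ' := (ν.restrict J).withDensity (fun s => (d s : ENNReal)) with hμ'
  have hdv : ∀ s ∈ J, (d s : ℝ) = (1 - s.1)⁻¹ := fun s hs =>
    Real.coe_toNNReal _ (inv_nonneg.mpr (by linarith [(hJ' s hs).2]))
  refine ⟨ν.real {z0}, ν.real {z1}, μ'.map φ, measureReal_nonneg, measureReal_nonneg, ?_, ?_, ?_⟩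
  · rw [Measure.map_apply hφm measurableSet_Ioi.compl]
    refine withDensity_absolutelyContinuous _ _ ?_
    rw [Measure.restrict_apply (hφm measurableSet_Ioi.compl)]
    convert measure_empty (μ := ν)
    ext s
    simp only [Set.mem_inter_iff, Set.mem_preimage, Set.mem_compl_iff, Set.mem_Ioi,
      Set.mem_empty_iff_false, iff_false, not_and]
    intro h1 h2
    obtain ⟨a, b⟩ := hJ' s h2
    exact h1 (div_pos a (by linarith))
  · rw [integrable_map_measure (by
      apply Measurable.aestronglyMeasurable; fun_prop) hφm.aemeasurable,
      hμ', integrable_withDensity_iff_integrable_smul hdm]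
    refine (integrable_const (1 : ℝ)).congr ?_
    filter_upwards [ae_restrict_mem hJm] with s hs
    obtain ⟨a, b⟩ := hJ' s hs
    rw [NNReal.smul_def, hdv s hs]
    simp only [Function.comp, hφ, smul_eq_mul]
    have : 1 - s.1 ≠ 0 := by linarith
    have h3 : 1 + s.1 / (1 - s.1) = (1 - s.1)⁻¹ := by field_simp; ring
    rw [h3, inv_inv, inv_mul_cancel₀ this]
  · intro x hx
    have hint : Integrable (fun s : UI => x / ((1 - s.1) * x + s.1)) ν := by
      have := (kx ⟨x, hx⟩).continuous.integrable_of_hasCompactSupport (μ := ν)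
        (HasCompactSupport.of_compactSpace _)
      exact this
    rw [h x hx, ← integral_add_compl hJm.compl hint, compl_compl]
    congr 1
    · have e : ({z0, z1} : Set UI) = {z0} ∪ {z1} := rfl
      have ne : z0 ≠ z1 := fun h => by
        have := congrArg Subtype.val h; simp [hz0, hz1] at this
      rw [e, setIntegral_union (by simpa using ne) (measurableSet_singleton _) hint.integrableOn
        hint.integrableOn, integral_singleton, integral_singleton]
      have := hx.ne'
      simp [hz0, hz1, this]
    · rw [integral_map hφm.aemeasurable (by
        apply Measurable.aestronglyMeasurable; fun_prop), hμ',
        integral_withDensity_eq_integral_smul hdm]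
      refine setIntegral_congr_fun hJm fun s hs => ?_
      obtain ⟨a, b⟩ := hJ' s hs
      simp only [NNReal.smul_def, hdv s hs, hφ, smul_eq_mul]
      have h1 : 1 - s.1 ≠ 0 := by linarith
      have h2 := (den_pos hx s.2.1 s.2.2).ne'
      have h3 : x + s.1 / (1 - s.1) = ((1 - s.1) * x + s.1) / (1 - s.1) := by field_simp
      rw [h3]
      field_simp

end Part7

open ContinuousLinearMap MeasureTheory

variable {H : Type*} [NormedAddCommGroup H] [InnerProductSpace ℂ H] [CompleteSpace H]

/-- A continuous real function on `(0, ∞)` is non-negative and operator monotone if and only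
if `f(x) = α + βx + ∫_{(0,∞)} x/(x+λ) dμ(λ)` with `α, β ≥ 0` and `μ` a positive measure on
`(0, ∞)` with `∫ (1+λ)⁻¹ dμ(λ) < ∞`. -/
theorem stmt14 [TopologicalSpace.SeparableSpace H] (hinf : ¬ FiniteDimensional ℂ H)
    (f : ℝ → ℝ) (hf : ContinuousOn f (Set.Ioi (0 : ℝ))) :
    ((∀ x : ℝ, 0 < x → 0 ≤ f x) ∧
      (∀ A B : H →L[ℂ] H, IsSelfAdjoint A → IsSelfAdjoint B →
        spectrum ℂ A ⊆ (fun x : ℝ => (x : ℂ)) '' Set.Ioi (0 : ℝ) →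
        spectrum ℂ B ⊆ (fun x : ℝ => (x : ℂ)) '' Set.Ioi (0 : ℝ) →
        (B - A).IsPositive → (cfc f B - cfc f A).IsPositive))
    ↔ (∃ (α β : ℝ) (μ : Measure ℝ), 0 ≤ α ∧ 0 ≤ β ∧ μ (Set.Ioi (0 : ℝ))ᶜ = 0 ∧
        Integrable (fun l : ℝ => (1 + l)⁻¹) μ ∧
        ∀ x : ℝ, 0 < x → f x = α + β * x + ∫ l, x / (x + l) ∂μ) := by
  constructor
  · rintro ⟨hnn, hmono⟩
    obtain ⟨ν, hν, h⟩ := exists_nu (f := f) (fun X hX c hc =>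
      pos_all hinf hf (show OpMono H f from hmono) hnn hX c hc)
    exact nu_to_mu ν h
  · rintro ⟨α, β, μ, hα, hβ, hμ, hint, hrep⟩
    exact easy_dir f hf α β μ hα hβ hμ hint hrep
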